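/- The node formulae of Core XPath (Core_XPath) have precisely the expressive power of unary FO² queries (first-order logic with two variables) over ordered unranked Σ-trees in the vocabulary ≺_ch, ≺*_ch, ≺_ns, ≺*_ns. -/

import Mathlib

/-!
A Core XPath node formula translates into two variables because the node reached by a path is
quantified one step at a time, so that the two variables can be reused alternately.

Conversely, the atoms `≺_ch`, `≺*_ch`, `≺_ns`, `≺*_ns` only distinguish finitely many relative
positions of two nodes (the same node, child, deeper descendant, next sibling, farther right
sibling, their converses, and "apart"), and each position is described by a path formula. Once the
position is fixed, all binary atoms have a known truth value, so a two-variable formula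
`φ(s, t)` becomes a Boolean combination of unary properties of `s` and of `t`, each definable by
induction. Hence `∃ t, φ(s, t)` is a finite disjunction, over the positions and the possible truth
values of the properties of `s`, of node formulas asserting that some node in that position
satisfies a definable property.
-/

namespace UnrankedTrees

/-! ### Unranked trees: tree domains and ordered unranked Σ-trees.
Nodes are finite strings over ℕ; a tree domain is a finite prefix-closed set
of nodes such that `s ++ [i] ∈ D` implies `s ++ [j] ∈ D` for all `j < i`. -/

abbrev Node : Type := List ℕ

/-- An ordered unranked tree over alphabet `A`: a tree domain with a labeling. -/
structure UTree (A : Type) where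
  dom : Finset Node
  nil_mem : ([] : Node) ∈ dom
  prefix_closed : ∀ ⦃s t : Node⦄, s ∈ dom → t <+: s → t ∈ dom
  sib_closed : ∀ ⦃s : Node⦄ ⦃i j : ℕ⦄, s ++ [i] ∈ dom → j < i → s ++ [j] ∈ dom
  label : Node → A

namespace UTree

variable {A : Type}

/-- The child relation `≺_ch`. -/
def childR (T : UTree A) (s t : Node) : Prop :=
  s ∈ T.dom ∧ t ∈ T.dom ∧ ∃ i : ℕ, t = s ++ [i]

/-- The descendant-or-self relation `≺*_ch` (the prefix relation). -/
def descR (T : UTree A) (s t : Node) : Prop :=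
  s ∈ T.dom ∧ t ∈ T.dom ∧ s <+: t

/-- The next-sibling relation `≺_ns`. -/
def nsR (T : UTree A) (s t : Node) : Prop :=
  s ∈ T.dom ∧ t ∈ T.dom ∧ ∃ (u : Node) (i : ℕ), s = u ++ [i] ∧ t = u ++ [i + 1]

/-- The sibling ordering `≺*_ns` (reflexive-transitive closure of next-sibling). -/
def sibR (T : UTree A) (s t : Node) : Prop :=
  s ∈ T.dom ∧ t ∈ T.dom ∧ ∃ (u : Node) (i j : ℕ), s = u ++ [i] ∧ t = u ++ [j] ∧ i ≤ j

/-- The first-child relation `≺_fc`. -/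
def firstChildR (T : UTree A) (s t : Node) : Prop :=
  s ∈ T.dom ∧ t ∈ T.dom ∧ t = s ++ [0]

/-- The number of children of a node. -/
noncomputable def childCount (T : UTree A) (s : Node) : ℕ :=
  Set.ncard {i : ℕ | s ++ [i] ∈ T.dom}

/-- The list of children of a node `s`, in sibling order: `s·0, …, s·(n-1)`. -/
noncomputable def childrenList (T : UTree A) (s : Node) : List Node :=
  (List.range (T.childCount s)).map fun i => s ++ [i]

/-- `s` is a leaf of `T`. -/
def isLeaf (T : UTree A) (s : Node) : Prop :=
  s ∈ T.dom ∧ ∀ i : ℕ, s ++ [i] ∉ T.dom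

/-- `s` has no next sibling in `T` (the root also counts as "last"). -/
def isLast (T : UTree A) (s : Node) : Prop :=
  s = [] ∨ ∃ (u : Node) (i : ℕ), s = u ++ [i] ∧ u ++ [i + 1] ∉ T.dom

end UTree

/-! ### XPath steps. -/

inductive XStep : Type where
  | ch : XStep        -- ≺_ch
  | chI : XStep       -- ≺_ch⁻
  | ns : XStep        -- ≺_ns
  | nsI : XStep       -- ≺_ns⁻

def XStep.rel {A : Type} (T : UTree A) : XStep → Node → Node → Prop
  | .ch => T.childR
  | .chI => fun s t => T.childR t s
  | .ns => T.nsR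
  | .nsI => fun s t => T.nsR t s

/-! ### Core XPath. -/

mutual
  inductive CoreNode (A : Type) : Type where
    | lab : A → CoreNode A
    | not : CoreNode A → CoreNode A
    | or : CoreNode A → CoreNode A → CoreNode A
    | E : CorePath A → CoreNode A
  inductive CorePath (A : Type) : Type where
    | test : CoreNode A → CorePath A
    | step : XStep → CorePath A
    | stepPlus : XStep → CorePath A              -- step⁺ (transitive closure)
    | comp : CorePath A → CorePath A → CorePath A
    | or : CorePath A → CorePath A → CorePath A
end

mutual
  def CoreNode.Sat {A : Type} (T : UTree A) : Node → CoreNode A → Prop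
    | s, .lab a => s ∈ T.dom ∧ T.label s = a
    | s, .not α => ¬ CoreNode.Sat T s α
    | s, .or α β => CoreNode.Sat T s α ∨ CoreNode.Sat T s β
    | s, .E β => ∃ t : Node, CorePath.Sat T s t β
  def CorePath.Sat {A : Type} (T : UTree A) : Node → Node → CorePath A → Prop
    | s, t, .test α => s = t ∧ CoreNode.Sat T s α
    | s, t, .step st => st.rel T s t
    | s, t, .stepPlus st => Relation.TransGen (st.rel T) s t
    | s, t, .comp β γ => ∃ u : Node, CorePath.Sat T s u β ∧ CorePath.Sat T u t γ
    | s, t, .or β γ => CorePath.Sat T s t β ∨ CorePath.Sat T s t γ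
end

/-! ### FO² over the vocabulary ≺_ch, ≺*_ch, ≺_ns, ≺*_ns. -/

inductive Vocab4 : Type where
  | ch : Vocab4
  | desc : Vocab4
  | ns : Vocab4
  | sib : Vocab4

def Vocab4.rel {A : Type} (T : UTree A) : Vocab4 → Node → Node → Prop
  | .ch => T.childR
  | .desc => T.descR
  | .ns => T.nsR
  | .sib => T.sibR

inductive FOV (A : Type) : Type where
  | eq : ℕ → ℕ → FOV A
  | lab : A → ℕ → FOV A
  | rel : Vocab4 → ℕ → ℕ → FOV A
  | not : FOV A → FOV A
  | and : FOV A → FOV A → FOV A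
  | ex : ℕ → FOV A → FOV A

namespace FOV

variable {A : Type}

def Sat (T : UTree A) (v : ℕ → Node) : FOV A → Prop
  | .eq x y => v x = v y
  | .lab a x => v x ∈ T.dom ∧ T.label (v x) = a
  | .rel r x y => r.rel T (v x) (v y)
  | .not φ => ¬ Sat T v φ
  | .and φ ψ => Sat T v φ ∧ Sat T v ψ
  | .ex n φ => ∃ s ∈ T.dom, Sat T (Function.update v n s) φ

/-- The list of variable indices occurring in a formula. -/
def vars : FOV A → List ℕ
  | .eq x y => [x, y]
  | .lab _ x => [x]
  | .rel _ x y => [x, y]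
  | .not φ => vars φ
  | .and φ ψ => vars φ ++ vars ψ
  | .ex n φ => n :: vars φ

/-- A two-variable formula: only the variables `0` and `1` are used. -/
def TwoVar (φ : FOV A) : Prop := ∀ n ∈ φ.vars, n < 2

end FOV

section TreeRelations

variable {A : Type} {T : UTree A} {s t : Node}

namespace UTree

theorem childR_iff_descR_and_length :
    T.childR s t ↔ T.descR s t ∧ t.length = s.length + 1 := by
  constructor
  · rintro ⟨hs, ht, i, rfl⟩
    exact ⟨⟨hs, ht, [i], rfl⟩, by simp⟩
  · rintro ⟨⟨hs, ht, w, rfl⟩, hlen⟩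
    obtain ⟨i, rfl⟩ := List.length_eq_one_iff.1 (show w.length = 1 by simpa using hlen)
    exact ⟨hs, ht, i, rfl⟩

theorem descR.length_le (h : T.descR s t) : s.length ≤ t.length :=
  h.2.2.length_le

theorem descR.eq_of_length_le (h : T.descR s t) (hlen : t.length ≤ s.length) : s = t :=
  h.2.2.eq_of_length_le hlen

theorem eq_iff_descR_and_descR (hs : s ∈ T.dom) (ht : t ∈ T.dom) :
    s = t ↔ T.descR s t ∧ T.descR t s := by
  constructor
  · rintro rfl
    exact ⟨⟨hs, hs, List.prefix_rfl⟩, ⟨hs, hs, List.prefix_rfl⟩⟩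
  · rintro ⟨hst, hts⟩
    exact hst.eq_of_length_le hts.length_le

theorem sibR_append_singleton_iff {u v : Node} {i j : ℕ} (hs : u ++ [i] ∈ T.dom)
    (ht : v ++ [j] ∈ T.dom) : T.sibR (u ++ [i]) (v ++ [j]) ↔ u = v ∧ i ≤ j := by
  simp only [sibR, hs, ht, true_and, List.append_singleton_inj]
  grind

theorem nsR_append_singleton_iff {u v : Node} {i j : ℕ} (hs : u ++ [i] ∈ T.dom)
    (ht : v ++ [j] ∈ T.dom) : T.nsR (u ++ [i]) (v ++ [j]) ↔ u = v ∧ i + 1 = j := by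
  simp only [nsR, hs, ht, true_and, List.append_singleton_inj]
  grind

theorem nsR.sibR (h : T.nsR s t) : T.sibR s t := by
  obtain ⟨hs, ht, u, i, rfl, rfl⟩ := h
  exact ⟨hs, ht, u, i, i + 1, rfl, rfl, i.le_succ⟩

theorem sibR.dropLast_eq (h : T.sibR s t) : s.dropLast = t.dropLast := by
  obtain ⟨_, _, u, i, j, rfl, rfl, _⟩ := h
  simp

theorem sibR.length_eq (h : T.sibR s t) : s.length = t.length := by
  obtain ⟨_, _, u, i, j, rfl, rfl, _⟩ := h
  simp

theorem transGen_childR_iff : Relation.TransGen T.childR s t ↔ T.descR s t ∧ s ≠ t := by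
  constructor
  · intro h
    suffices T.descR s t ∧ s.length < t.length from ⟨this.1, fun hst => by simp [hst] at this⟩
    induction h with
    | single h =>
      obtain ⟨h, hlen⟩ := childR_iff_descR_and_length.1 h
      exact ⟨h, by omega⟩
    | tail _ h ih =>
      obtain ⟨h, hlen⟩ := childR_iff_descR_and_length.1 h
      exact ⟨⟨ih.1.1, h.2.1, ih.1.2.2.trans h.2.2⟩, by omega⟩
  · rintro ⟨⟨_, ht, w, rfl⟩, hne⟩
    induction w using List.reverseRecOn with
    | nil => simp at hne
    | append_singleton w i ih =>
      have hw : s ++ w ∈ T.dom := T.prefix_closed ht ⟨[i], by simp⟩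
      have hstep : T.childR (s ++ w) (s ++ (w ++ [i])) := ⟨hw, ht, i, by simp⟩
      rcases eq_or_ne w [] with rfl | hnil
      · exact .single (by simpa using hstep)
      · exact (ih (by simpa using hnil) hw).tail hstep

theorem transGen_nsR_iff : Relation.TransGen T.nsR s t ↔ T.sibR s t ∧ s ≠ t := by
  constructor
  · intro h
    suffices ∃ u i j, i < j ∧ s ∈ T.dom ∧ t ∈ T.dom ∧ s = u ++ [i] ∧ t = u ++ [j] by
      obtain ⟨u, i, j, hij, hs, ht, rfl, rfl⟩ := this
      exact ⟨⟨hs, ht, u, i, j, rfl, rfl, hij.le⟩, by simp [hij.ne]⟩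
    induction h with
    | single h =>
      obtain ⟨hs, ht, u, i, rfl, rfl⟩ := h
      exact ⟨u, i, i + 1, i.lt_succ_self, hs, ht, rfl, rfl⟩
    | tail _ h ih =>
      obtain ⟨u, i, j, hij, hs, hj, rfl, rfl⟩ := ih
      obtain ⟨_, ht, v, k, hv, rfl⟩ := h
      obtain ⟨rfl, rfl⟩ := List.append_singleton_inj.1 hv
      exact ⟨u, i, j + 1, hij.trans j.lt_succ_self, hs, ht, rfl, rfl⟩
  · rintro ⟨⟨hs, ht, u, i, j, rfl, rfl, hij⟩, hne⟩
    replace hij : i < j := hij.lt_of_ne (by simpa using hne)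
    induction j, hij using Nat.le_induction with
    | base => exact .single ⟨hs, ht, u, i, rfl, rfl⟩
    | succ j hij ih =>
      have hj : u ++ [j] ∈ T.dom := T.sib_closed ht j.lt_succ_self
      exact (ih hj (by simpa using (Nat.lt_of_succ_le hij).ne)).tail ⟨hj, ht, u, j, rfl, rfl⟩

/-- Nodes that are neither comparable in the descendant order nor siblings: their paths from the
root split at distinct letters `i`, `j`, which are not both the last ones. -/
def apartR (T : UTree A) (s t : Node) : Prop :=
  s ∈ T.dom ∧ t ∈ T.dom ∧ ∃ (u w w' : Node) (i j : ℕ),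
    s = u ++ i :: w ∧ t = u ++ j :: w' ∧ i ≠ j ∧ (w ≠ [] ∨ w' ≠ [])

theorem apartR.symm (h : T.apartR s t) : T.apartR t s := by
  obtain ⟨hs, ht, u, w, w', i, j, hs_eq, ht_eq, hij, hne⟩ := h
  exact ⟨ht, hs, u, w', w, j, i, ht_eq, hs_eq, hij.symm, hne.symm⟩

theorem apartR.not_descR (h : T.apartR s t) : ¬ T.descR s t := by
  obtain ⟨_, _, u, w, w', i, j, rfl, rfl, hij, _⟩ := h
  rintro ⟨_, _, hpre⟩
  rw [List.prefix_append_right_inj, List.cons_prefix_cons] at hpre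
  exact hij hpre.1

theorem apartR.not_sibR (h : T.apartR s t) : ¬ T.sibR s t := by
  obtain ⟨_, _, u, w, w', i, j, rfl, rfl, hij, hne⟩ := h
  intro hsib
  have hparent := hsib.dropLast_eq
  have hlen := hsib.length_eq
  cases w <;> cases w' <;> simp_all [List.dropLast_append_of_ne_nil]

theorem apartR.not_rel (h : T.apartR s t) (r : Vocab4) : ¬ r.rel T s t := by
  cases r with
  | ch => exact fun hr => h.not_descR (childR_iff_descR_and_length.1 hr).1
  | desc => exact h.not_descR
  | ns => exact fun hr => h.not_sibR (nsR.sibR hr)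
  | sib => exact h.not_sibR

theorem descR.rel_iff_of_length_lt (h : T.descR s t) (hlt : s.length < t.length) (r : Vocab4) :
    r.rel T s t ↔ r = .desc ∨ r = .ch ∧ t.length = s.length + 1 := by
  have hsib : ¬ T.sibR s t := fun hst => hlt.ne hst.length_eq
  cases r with
  | ch => simp [Vocab4.rel, childR_iff_descR_and_length, h]
  | desc => simp [Vocab4.rel, h]
  | ns => simpa [Vocab4.rel] using mt nsR.sibR hsib
  | sib => simpa [Vocab4.rel] using hsib

theorem not_rel_of_length_lt (hlt : s.length < t.length) (r : Vocab4) : ¬ r.rel T t s := by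
  have hdesc : ¬ T.descR t s := fun hts => hlt.not_ge hts.length_le
  have hsib : ¬ T.sibR t s := fun hts => hlt.ne' hts.length_eq
  cases r with
  | ch => exact fun hr => hdesc (childR_iff_descR_and_length.1 hr).1
  | desc => exact hdesc
  | ns => exact fun hr => hsib (nsR.sibR hr)
  | sib => exact hsib

theorem rel_append_singleton_iff {u : Node} {i j : ℕ} (hs : u ++ [i] ∈ T.dom)
    (ht : u ++ [j] ∈ T.dom) (r : Vocab4) : r.rel T (u ++ [i]) (u ++ [j]) ↔
      r = .desc ∧ i = j ∨ r = .ns ∧ i + 1 = j ∨ r = .sib ∧ i ≤ j := by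
  cases r <;> simp [Vocab4.rel, childR_iff_descR_and_length, descR, nsR_append_singleton_iff,
    sibR_append_singleton_iff, hs, ht]

end UTree

theorem prefix_or_prefix_or_diverge (s t : Node) :
    s <+: t ∨ t <+: s ∨
      ∃ (u w w' : Node) (i j : ℕ), s = u ++ i :: w ∧ t = u ++ j :: w' ∧ i ≠ j := by
  induction s generalizing t with
  | nil => exact .inl List.nil_prefix
  | cons a s ih =>
    rcases t with _ | ⟨b, t⟩
    · exact .inr (.inl List.nil_prefix)
    · rcases eq_or_ne a b with rfl | hab
      · rcases ih t with h | h | ⟨u, w, w', i, j, rfl, rfl, hij⟩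
        · exact .inl ((List.prefix_cons_inj a).2 h)
        · exact .inr (.inl ((List.prefix_cons_inj a).2 h))
        · exact .inr (.inr ⟨a :: u, w, w', i, j, rfl, rfl, hij⟩)
      · exact .inr (.inr ⟨[], s, t, a, b, rfl, rfl, hab⟩)

end TreeRelations

section Paths

variable {A : Type} {T : UTree A} {s t : Node}

namespace XStep

/-- The converse of an XPath step. -/
def inv : XStep → XStep
  | .ch => .chI
  | .chI => .ch
  | .ns => .nsI
  | .nsI => .ns

theorem rel_inv (st : XStep) : st.inv.rel T = Function.swap (st.rel T) := by
  cases st <;> rfl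

theorem transGen_chI_iff :
    Relation.TransGen (XStep.chI.rel T) s t ↔ T.descR t s ∧ t ≠ s :=
  Relation.transGen_swap.trans UTree.transGen_childR_iff

theorem transGen_nsI_iff :
    Relation.TransGen (XStep.nsI.rel T) s t ↔ T.sibR t s ∧ t ≠ s :=
  Relation.transGen_swap.trans UTree.transGen_nsR_iff

theorem mem_dom_of_rel (st : XStep) (h : st.rel T s t) : t ∈ T.dom := by
  cases st
  exacts [h.2.1, h.1, h.2.1, h.1]

theorem mem_dom_of_transGen (st : XStep) (h : Relation.TransGen (st.rel T) s t) : t ∈ T.dom := by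
  obtain ⟨_, _, hlast⟩ := Relation.TransGen.tail'_iff.1 h
  exact st.mem_dom_of_rel hlast

end XStep

namespace CorePath

theorem mem_dom_of_sat : ∀ (β : CorePath A) {s t : Node}, s ∈ T.dom → β.Sat T s t → t ∈ T.dom
  | .test α, s, t, hs, h => by
    simp only [Sat] at h
    exact h.1 ▸ hs
  | .step st, s, t, _, h => by
    simp only [Sat] at h
    exact st.mem_dom_of_rel h
  | .stepPlus st, s, t, _, h => by
    simp only [Sat] at h
    exact st.mem_dom_of_transGen h
  | .comp β γ, s, t, hs, h => by
    simp only [Sat] at h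
    obtain ⟨u, hsu, hut⟩ := h
    exact γ.mem_dom_of_sat (β.mem_dom_of_sat hs hsu) hut
  | .or β γ, s, t, hs, h => by
    simp only [Sat] at h
    exact h.elim (β.mem_dom_of_sat hs) (γ.mem_dom_of_sat hs)

/-- The path formula that walks `β` backwards. -/
def converse : CorePath A → CorePath A
  | .test α => .test α
  | .step st => .step st.inv
  | .stepPlus st => .stepPlus st.inv
  | .comp β γ => .comp γ.converse β.converse
  | .or β γ => .or β.converse γ.converse

theorem sat_converse_iff : ∀ (β : CorePath A) (s t : Node), β.converse.Sat T s t ↔ β.Sat T t s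
  | .test α, s, t => by
    simp only [converse, Sat]
    grind
  | .step st, s, t => by
    simp only [converse, Sat]
    rw [st.rel_inv]
  | .stepPlus st, s, t => by
    simp only [converse, Sat, st.rel_inv]
    exact Relation.transGen_swap
  | .comp β γ, s, t => by
    simp only [converse, Sat, sat_converse_iff β, sat_converse_iff γ, and_comm]
  | .or β γ, s, t => by
    simp only [converse, Sat, sat_converse_iff β, sat_converse_iff γ]

/-- The node formula "not the root". -/
def hasParent : CoreNode A :=
  .E (.step .chI)

theorem sat_hasParent_iff (hs : s ∈ T.dom) : hasParent.Sat T s ↔ s ≠ [] := by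
  simp only [hasParent, CoreNode.Sat, Sat, XStep.rel]
  constructor
  · rintro ⟨t, _, _, i, rfl⟩
    simp
  · intro hne
    exact ⟨s.dropLast, T.prefix_closed hs s.dropLast_prefix, hs, s.getLast hne,
      (List.dropLast_concat_getLast hne).symm⟩

/-- Descend at least two levels. -/
def deepDesc : CorePath A :=
  .comp (.step .ch) (.stepPlus .ch)

theorem sat_deepDesc_iff :
    deepDesc.Sat T s t ↔ T.descR s t ∧ s.length + 2 ≤ t.length := by
  simp only [deepDesc, Sat, XStep.rel, UTree.transGen_childR_iff,
    UTree.childR_iff_descR_and_length]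
  constructor
  · rintro ⟨u, ⟨hsu, hlen⟩, hut, hne⟩
    have := mt hut.eq_of_length_le hne
    exact ⟨⟨hsu.1, hut.2.1, hsu.2.2.trans hut.2.2⟩, by omega⟩
  · rintro ⟨⟨hs, ht, w, rfl⟩, hlen⟩
    rcases w with _ | ⟨i, _ | ⟨j, w⟩⟩
    · simp at hlen
    · simp at hlen
    · have hi : s ++ [i] ∈ T.dom := T.prefix_closed ht ⟨j :: w, by simp⟩
      exact ⟨s ++ [i], ⟨⟨hs, hi, [i], rfl⟩, by simp⟩, ⟨hi, ht, j :: w, by simp⟩, by simp⟩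

/-- Move at least two siblings to the right. -/
def farRight : CorePath A :=
  .comp (.step .ns) (.stepPlus .ns)

theorem sat_farRight_iff : farRight.Sat T s t ↔
    s ∈ T.dom ∧ t ∈ T.dom ∧ ∃ (u : Node) (i j : ℕ), s = u ++ [i] ∧ t = u ++ [j] ∧ i + 1 < j := by
  simp only [farRight, Sat, XStep.rel, UTree.transGen_nsR_iff]
  constructor
  · rintro ⟨_, ⟨hs, hmid, u, i, rfl, rfl⟩, ⟨_, ht, v, k, j, hv, rfl, hkj⟩, hne⟩
    obtain ⟨rfl, rfl⟩ := List.append_singleton_inj.1 hv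
    exact ⟨hs, ht, u, i, j, rfl, rfl, hkj.lt_of_ne (by simpa using hne)⟩
  · rintro ⟨hs, ht, u, i, j, rfl, rfl, hij⟩
    have hmid : u ++ [i + 1] ∈ T.dom := T.sib_closed ht hij
    exact ⟨u ++ [i + 1], ⟨hs, hmid, u, i, rfl, rfl⟩,
      ⟨hmid, ht, u, i + 1, j, rfl, rfl, hij.le⟩, by simpa using hij.ne⟩

/-- Move to another sibling. -/
def sibling : CorePath A :=
  .or (.stepPlus .ns) (.stepPlus .nsI)

theorem sat_sibling_iff : sibling.Sat T s t ↔
    s ∈ T.dom ∧ t ∈ T.dom ∧ ∃ (u : Node) (i j : ℕ), s = u ++ [i] ∧ t = u ++ [j] ∧ i ≠ j := by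
  rw [sibling, Sat, Sat, Sat, XStep.transGen_nsI_iff, XStep.rel, UTree.transGen_nsR_iff]
  constructor
  · rintro (⟨⟨hs, ht, u, i, j, rfl, rfl, _⟩, hne⟩ | ⟨⟨ht, hs, u, j, i, rfl, rfl, _⟩, hne⟩)
    · exact ⟨hs, ht, u, i, j, rfl, rfl, by simpa using hne⟩
    · exact ⟨hs, ht, u, i, j, rfl, rfl, by simpa using hne.symm⟩
  · rintro ⟨hs, ht, u, i, j, rfl, rfl, hij⟩
    rcases hij.lt_or_gt with hlt | hlt
    · exact .inl ⟨⟨hs, ht, u, i, j, rfl, rfl, hlt.le⟩, by simpa using hij⟩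
    · exact .inr ⟨⟨ht, hs, u, j, i, rfl, rfl, hlt.le⟩, by simpa using hij.symm⟩

/-- A proper descendant of another sibling. -/
def siblingDesc : CorePath A :=
  .comp sibling (.stepPlus .ch)

theorem sat_siblingDesc_iff : siblingDesc.Sat T s t ↔ s ∈ T.dom ∧ t ∈ T.dom ∧
    ∃ (u w : Node) (i j : ℕ), s = u ++ [i] ∧ t = u ++ j :: w ∧ i ≠ j ∧ w ≠ [] := by
  simp only [siblingDesc, Sat, sat_sibling_iff, XStep.rel, UTree.transGen_childR_iff]
  constructor
  · rintro ⟨_, ⟨hs, _, u, i, j, rfl, rfl, hij⟩, ⟨_, ht, w, rfl⟩, hne⟩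
    exact ⟨hs, ht, u, w, i, j, rfl, by simp, hij, by simpa using hne⟩
  · rintro ⟨hs, ht, u, w, i, j, rfl, rfl, hij, hne⟩
    have hj : u ++ [j] ∈ T.dom := T.prefix_closed ht ⟨w, by simp⟩
    exact ⟨u ++ [j], ⟨hs, hj, u, i, j, rfl, rfl, hij⟩, ⟨hj, ht, w, by simp⟩, by simpa using hne⟩

/-- Reach a node in position `UTree.apartR`: climb to a child of the longest common prefix, move to
another sibling and descend, where at least one of the two vertical moves is proper. -/
def apart : CorePath A :=
  .or siblingDesc (.comp (.stepPlus .chI) (.or sibling siblingDesc))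

theorem sat_apart_iff : apart.Sat T s t ↔ T.apartR s t := by
  simp only [apart, Sat, sat_siblingDesc_iff, sat_sibling_iff, XStep.transGen_chI_iff]
  constructor
  · rintro (⟨hs, ht, u, w, i, j, rfl, rfl, hij, hne⟩ |
      ⟨_, ⟨⟨_, hs, w, rfl⟩, hw⟩, ⟨_, ht, u, i, j, rfl, rfl, hij⟩ |
        ⟨_, ht, u, w', i, j, rfl, rfl, hij, _⟩⟩)
    · exact ⟨hs, ht, u, [], w, i, j, rfl, rfl, hij, .inr hne⟩
    · exact ⟨hs, ht, u, w, [], i, j, by simp, rfl, hij, .inl (by simpa using hw)⟩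
    · exact ⟨hs, ht, u, w, w', i, j, by simp, rfl, hij, .inl (by simpa using hw)⟩
  · rintro ⟨hs, ht, u, w, w', i, j, rfl, rfl, hij, hne⟩
    by_cases hw : w = []
    · subst hw
      exact .inl ⟨hs, ht, u, w', i, j, rfl, rfl, hij, by simpa using hne⟩
    · have hi : u ++ [i] ∈ T.dom := T.prefix_closed hs ⟨w, by simp⟩
      refine .inr ⟨u ++ [i], ⟨⟨hi, hs, w, by simp⟩, by simpa using hw⟩, ?_⟩
      by_cases hw' : w' = []
      · subst hw'
        exact .inl ⟨hi, ht, u, i, j, rfl, rfl, hij⟩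
      · exact .inr ⟨hi, ht, u, w', i, j, rfl, rfl, hij, hw'⟩

/-- Path formulas covering, up to exchanging the two nodes, all relative positions of two nodes
that the atomic relations distinguish. The diagonal is split at the root, where `≺*_ns` is not
reflexive. -/
def forwardPositions : List (CorePath A) :=
  [.test (.not hasParent), .test hasParent, .step .ch, deepDesc, .step .ns, farRight, apart]

/-- Finitely many path formulas that cover all pairs of nodes and each of which determines the
atomic relations between its source and its target. -/
def positions : List (CorePath A) :=
  forwardPositions ++ forwardPositions.map converse

theorem exists_forwardPositions_of_descR (h : T.descR s t) :
    ∃ β ∈ forwardPositions, β.Sat T s t := by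
  rcases (show t.length ≤ s.length ∨ t.length = s.length + 1 ∨ s.length + 2 ≤ t.length by omega)
    with hlen | hlen | hlen
  · obtain rfl := h.eq_of_length_le hlen
    by_cases hs : hasParent.Sat T s
    · exact ⟨.test hasParent, by simp [forwardPositions], by simp only [Sat, hs, and_self]⟩
    · exact ⟨.test (.not hasParent), by simp [forwardPositions],
        by simp only [Sat, CoreNode.Sat, hs, not_false_eq_true, and_self]⟩
  · exact ⟨.step .ch, by simp [forwardPositions],
      by simpa only [Sat, XStep.rel] using UTree.childR_iff_descR_and_length.2 ⟨h, hlen⟩⟩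
  · exact ⟨deepDesc, by simp [forwardPositions], sat_deepDesc_iff.2 ⟨h, hlen⟩⟩

theorem exists_forwardPositions_of_lt {u : Node} {i j : ℕ} (hs : u ++ [i] ∈ T.dom)
    (ht : u ++ [j] ∈ T.dom) (hij : i < j) :
    ∃ β ∈ forwardPositions, β.Sat T (u ++ [i]) (u ++ [j]) := by
  rcases (Nat.succ_le_of_lt hij).eq_or_lt with rfl | hfar
  · exact ⟨.step .ns, by simp [forwardPositions],
      by simpa only [Sat, XStep.rel] using ⟨hs, ht, u, i, rfl, rfl⟩⟩
  · exact ⟨farRight, by simp [forwardPositions],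
      sat_farRight_iff.2 ⟨hs, ht, u, i, j, rfl, rfl, hfar⟩⟩

theorem exists_forwardPositions (hs : s ∈ T.dom) (ht : t ∈ T.dom) :
    (∃ β ∈ forwardPositions, β.Sat T s t) ∨ ∃ β ∈ forwardPositions, β.Sat T t s := by
  rcases prefix_or_prefix_or_diverge s t with h | h | ⟨u, w, w', i, j, rfl, rfl, hij⟩
  · exact .inl (exists_forwardPositions_of_descR ⟨hs, ht, h⟩)
  · exact .inr (exists_forwardPositions_of_descR ⟨ht, hs, h⟩)
  · by_cases hne : w ≠ [] ∨ w' ≠ []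
    · exact .inl ⟨apart, by simp [forwardPositions],
        sat_apart_iff.2 ⟨hs, ht, u, w, w', i, j, rfl, rfl, hij, hne⟩⟩
    · obtain ⟨rfl, rfl⟩ : w = [] ∧ w' = [] := by simpa using hne
      exact hij.lt_or_gt.imp (exists_forwardPositions_of_lt hs ht)
        (exists_forwardPositions_of_lt ht hs)

theorem exists_positions (hs : s ∈ T.dom) (ht : t ∈ T.dom) :
    ∃ β ∈ positions, β.Sat T s t := by
  rcases exists_forwardPositions hs ht with ⟨β, hβ, h⟩ | ⟨β, hβ, h⟩
  · exact ⟨β, List.mem_append_left _ hβ, h⟩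
  · exact ⟨β.converse, List.mem_append_right _ (List.mem_map_of_mem hβ),
      (sat_converse_iff β s t).2 h⟩

/-- The truth of every atomic relation between source and target, in either direction, is the same
for all pairs of nodes connected by `β`. -/
def DecidesAtoms (β : CorePath A) : Prop :=
  ∀ r : Vocab4, ∃ p q : Prop, ∀ ⦃T : UTree A⦄ ⦃s t : Node⦄, s ∈ T.dom → β.Sat T s t →
    (r.rel T s t ↔ p) ∧ (r.rel T t s ↔ q)

theorem DecidesAtoms.converse {β : CorePath A} (hβ : β.DecidesAtoms) :
    β.converse.DecidesAtoms := by
  intro r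
  obtain ⟨p, q, h⟩ := hβ r
  refine ⟨q, p, fun T s t hs hst => ?_⟩
  exact (h (β.converse.mem_dom_of_sat hs hst) ((sat_converse_iff β s t).1 hst)).symm

theorem decidesAtoms_root : (test (A := A) (.not hasParent)).DecidesAtoms := by
  refine fun r => ⟨r = .desc, r = .desc, fun T s t hs h => ?_⟩
  simp only [Sat, CoreNode.Sat, sat_hasParent_iff hs, not_not] at h
  obtain ⟨rfl, rfl⟩ := h
  cases r <;> simp [Vocab4.rel, UTree.childR, UTree.descR, UTree.nsR, UTree.sibR, hs]

theorem decidesAtoms_inner : (test (A := A) hasParent).DecidesAtoms := by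
  refine fun r => ⟨r = .desc ∨ r = .sib, r = .desc ∨ r = .sib, fun T s t hs h => ?_⟩
  simp only [Sat, sat_hasParent_iff hs] at h
  obtain ⟨rfl, hne⟩ := h
  obtain ⟨u, i, rfl⟩ := (List.eq_nil_or_concat' s).resolve_left hne
  simp [UTree.rel_append_singleton_iff hs hs]

theorem decidesAtoms_child : (step (A := A) .ch).DecidesAtoms := by
  refine fun r => ⟨r = .desc ∨ r = .ch, False, fun T s t _ h => ?_⟩
  obtain ⟨hdesc, hlen⟩ : T.descR s t ∧ t.length = s.length + 1 := by
    simpa only [Sat, XStep.rel, UTree.childR_iff_descR_and_length] using h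
  have hlt : s.length < t.length := by omega
  exact ⟨by simp [hdesc.rel_iff_of_length_lt hlt, hlen],
    iff_false_intro (UTree.not_rel_of_length_lt hlt r)⟩

theorem decidesAtoms_deepDesc : (deepDesc (A := A)).DecidesAtoms := by
  refine fun r => ⟨r = .desc, False, fun T s t _ h => ?_⟩
  obtain ⟨hdesc, hlen⟩ := sat_deepDesc_iff.1 h
  have hlt : s.length < t.length := by omega
  have hne : t.length ≠ s.length + 1 := by omega
  exact ⟨by simp [hdesc.rel_iff_of_length_lt hlt, hne],
    iff_false_intro (UTree.not_rel_of_length_lt hlt r)⟩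

theorem decidesAtoms_next : (step (A := A) .ns).DecidesAtoms := by
  refine fun r => ⟨r = .ns ∨ r = .sib, False, fun T s t _ h => ?_⟩
  obtain ⟨hs, ht, u, i, rfl, rfl⟩ : T.nsR s t := by simpa only [Sat, XStep.rel] using h
  simp [UTree.rel_append_singleton_iff, hs, ht, Nat.add_assoc]

theorem decidesAtoms_farRight : (farRight (A := A)).DecidesAtoms := by
  refine fun r => ⟨r = .sib, False, fun T s t _ h => ?_⟩
  obtain ⟨hs, ht, u, i, j, rfl, rfl, hij⟩ := sat_farRight_iff.1 h
  simp only [UTree.rel_append_singleton_iff, hs, ht]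
  grind

theorem decidesAtoms_apart : (apart (A := A)).DecidesAtoms := by
  refine fun r => ⟨False, False, fun T s t _ h => ?_⟩
  replace h := sat_apart_iff.1 h
  exact ⟨iff_false_intro (h.not_rel r), iff_false_intro (h.symm.not_rel r)⟩

theorem decidesAtoms_of_mem_positions {β : CorePath A} (hβ : β ∈ positions) : β.DecidesAtoms := by
  have hforward : ∀ γ ∈ forwardPositions (A := A), γ.DecidesAtoms := by
    simp only [forwardPositions, List.forall_mem_cons, List.not_mem_nil, false_implies,
      implies_true, and_true]
    exact ⟨decidesAtoms_root, decidesAtoms_inner, decidesAtoms_child, decidesAtoms_deepDesc,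
      decidesAtoms_next, decidesAtoms_farRight, decidesAtoms_apart⟩
  rcases List.mem_append.1 hβ with hβ | hβ
  · exact hforward β hβ
  · obtain ⟨γ, hγ, rfl⟩ := List.mem_map.1 hβ
    exact (hforward γ hγ).converse

end CorePath

end Paths

section CoreDefinability

variable {A : Type}

/-- The unary query `P` is defined, on the nodes of every tree, by a node formula of Core XPath. -/
def CoreDefinable (P : UTree A → Node → Prop) : Prop :=
  ∃ α : CoreNode A, ∀ (T : UTree A) (s : Node), s ∈ T.dom → (P T s ↔ α.Sat T s)

namespace CoreDefinable

variable {P P' : UTree A → Node → Prop}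

theorem congr (hP : CoreDefinable P) (h : ∀ T, ∀ s ∈ T.dom, (P' T s ↔ P T s)) :
    CoreDefinable P' := by
  obtain ⟨α, hα⟩ := hP
  exact ⟨α, fun T s hs => (h T s hs).trans (hα T s hs)⟩

theorem lab (a : A) : CoreDefinable fun T s => s ∈ T.dom ∧ T.label s = a :=
  ⟨.lab a, fun T s _ => by simp only [CoreNode.Sat]⟩

theorem not (hP : CoreDefinable P) : CoreDefinable fun T s => ¬ P T s := by
  obtain ⟨α, hα⟩ := hP
  exact ⟨.not α, fun T s hs => by simp only [CoreNode.Sat, hα T s hs]⟩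

theorem or (hP : CoreDefinable P) (hP' : CoreDefinable P') :
    CoreDefinable fun T s => P T s ∨ P' T s := by
  obtain ⟨α, hα⟩ := hP
  obtain ⟨α', hα'⟩ := hP'
  exact ⟨.or α α', fun T s hs => by simp only [CoreNode.Sat, hα T s hs, hα' T s hs]⟩

theorem and (hP : CoreDefinable P) (hP' : CoreDefinable P') :
    CoreDefinable fun T s => P T s ∧ P' T s :=
  (hP.not.or hP'.not).not.congr fun _ _ _ => by tauto

theorem const (p : Prop) : CoreDefinable fun (_ : UTree A) _ => p := by
  have htrue : CoreDefinable fun (_ : UTree A) _ => True :=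
    ⟨.or (.E (.step .ch)) (.not (.E (.step .ch))), fun T s _ => by
      simp only [CoreNode.Sat, Classical.em]⟩
  by_cases hp : p
  · simpa only [hp] using htrue
  · simpa only [hp, not_true_eq_false] using htrue.not

theorem exists_path (β : CorePath A) (hP : CoreDefinable P) :
    CoreDefinable fun T s => ∃ t, β.Sat T s t ∧ P T t := by
  obtain ⟨α, hα⟩ := hP
  refine ⟨.E (.comp β (.test α)), fun T s hs => ?_⟩
  simp only [CoreNode.Sat, CorePath.Sat]
  constructor
  · rintro ⟨t, hst, ht⟩
    exact ⟨t, t, hst, rfl, (hα T t (β.mem_dom_of_sat hs hst)).1 ht⟩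
  · rintro ⟨_, t, hst, rfl, ht⟩
    exact ⟨t, hst, (hα T t (β.mem_dom_of_sat hs hst)).2 ht⟩

theorem exists_mem_of_finite {ι : Type*} {S : Set ι} (hS : S.Finite)
    {P : ι → UTree A → Node → Prop} (hP : ∀ k ∈ S, CoreDefinable (P k)) :
    CoreDefinable fun T s => ∃ k ∈ S, P k T s := by
  induction S, hS using Set.Finite.induction_on with
  | empty => simpa using const False
  | insert _ _ ih =>
    simp only [Set.exists_mem_insert]
    exact (hP _ (Set.mem_insert _ _)).or (ih fun k hk => hP k (Set.mem_insert_of_mem _ hk))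

end CoreDefinable

/-- Along the path formula `β`, the binary query `R` only depends on definable properties of the
source and of the target separately: the source has one of finitely many definable colours, and
each colour `k` has a definable property `D k` of the target equivalent to `R`. -/
def SeparatedAlong (β : CorePath A) (R : UTree A → Node → Node → Prop) : Prop :=
  ∃ (K : Type) (_ : Finite K) (c : UTree A → Node → K) (D : K → UTree A → Node → Prop),
    (∀ k, CoreDefinable fun T s => c T s = k) ∧ (∀ k, CoreDefinable (D k)) ∧
      ∀ ⦃T : UTree A⦄ ⦃s t : Node⦄, s ∈ T.dom → β.Sat T s t → (R T s t ↔ D (c T s) T t)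

namespace SeparatedAlong

variable {β : CorePath A} {P : UTree A → Node → Prop} {R R' : UTree A → Node → Node → Prop}

theorem congr (hR : SeparatedAlong β R)
    (h : ∀ ⦃T s t⦄, s ∈ T.dom → β.Sat T s t → (R' T s t ↔ R T s t)) : SeparatedAlong β R' := by
  obtain ⟨K, hK, c, D, hc, hD, hR⟩ := hR
  exact ⟨K, hK, c, D, hc, hD, fun T s t hs hst => (h hs hst).trans (hR hs hst)⟩

theorem of_source (β : CorePath A) (hP : CoreDefinable P) :
    SeparatedAlong β fun T s _ => P T s := by
  refine ⟨Prop, inferInstance, P, fun p _ _ => p, fun p => ?_, .const, fun _ _ _ _ _ => .rfl⟩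
  by_cases hp : p
  · simpa only [hp, eq_iff_iff, iff_true] using hP
  · simpa only [hp, eq_iff_iff, iff_false] using hP.not

theorem of_target (β : CorePath A) (hP : CoreDefinable P) :
    SeparatedAlong β fun T _ t => P T t :=
  ⟨Unit, inferInstance, fun _ _ => (), fun _ => P, fun _ => .const _, fun _ => hP,
    fun _ _ _ _ _ => .rfl⟩

theorem not (hR : SeparatedAlong β R) : SeparatedAlong β fun T s t => ¬ R T s t := by
  obtain ⟨K, hK, c, D, hc, hD, hR⟩ := hR
  exact ⟨K, hK, c, fun k T t => ¬ D k T t, hc, fun k => (hD k).not,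
    fun T s t hs hst => not_congr (hR hs hst)⟩

theorem and (hR : SeparatedAlong β R) (hR' : SeparatedAlong β R') :
    SeparatedAlong β fun T s t => R T s t ∧ R' T s t := by
  obtain ⟨K, hK, c, D, hc, hD, hR⟩ := hR
  obtain ⟨K', hK', c', D', hc', hD', hR'⟩ := hR'
  refine ⟨K × K', inferInstance, fun T s => (c T s, c' T s),
    fun k T t => D k.1 T t ∧ D' k.2 T t, fun k => ?_, fun k => (hD k.1).and (hD' k.2),
    fun T s t hs hst => and_congr (hR hs hst) (hR' hs hst)⟩
  simpa only [Prod.ext_iff] using (hc k.1).and (hc' k.2)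

theorem exists_path (hR : SeparatedAlong β R) :
    CoreDefinable fun T s => ∃ t, β.Sat T s t ∧ R T s t := by
  obtain ⟨K, hK, c, D, hc, hD, hR⟩ := hR
  have hcolour (k : K) : CoreDefinable fun T s => c T s = k ∧ ∃ t, β.Sat T s t ∧ D k T t :=
    (hc k).and ((hD k).exists_path β)
  refine (CoreDefinable.exists_mem_of_finite Set.finite_univ fun k _ => hcolour k).congr
    fun T s hs => ?_
  simp only [Set.mem_univ, true_and, exists_eq_left']
  exact exists_congr fun t => and_congr_right (hR hs)

end SeparatedAlong

/-- The binary query `R` is separated along each of the finitely many relative positions of two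
nodes. -/
def Separated (R : UTree A → Node → Node → Prop) : Prop :=
  ∀ β ∈ CorePath.positions, SeparatedAlong β R

namespace Separated

variable {P : UTree A → Node → Prop} {R R' : UTree A → Node → Node → Prop}

theorem congr (hR : Separated R)
    (h : ∀ ⦃T s t⦄, s ∈ T.dom → t ∈ T.dom → (R' T s t ↔ R T s t)) : Separated R' :=
  fun β hβ => (hR β hβ).congr fun _ _ _ hs hst => h hs (β.mem_dom_of_sat hs hst)

theorem of_source (hP : CoreDefinable P) : Separated fun T s _ => P T s :=
  fun β _ => .of_source β hP

theorem of_target (hP : CoreDefinable P) : Separated fun T _ t => P T t :=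
  fun β _ => .of_target β hP

theorem not (hR : Separated R) : Separated fun T s t => ¬ R T s t :=
  fun β hβ => (hR β hβ).not

theorem and (hR : Separated R) (hR' : Separated R') :
    Separated fun T s t => R T s t ∧ R' T s t :=
  fun β hβ => (hR β hβ).and (hR' β hβ)

theorem rel (r : Vocab4) : Separated fun (T : UTree A) s t => r.rel T s t := by
  intro β hβ
  obtain ⟨p, _, h⟩ := CorePath.decidesAtoms_of_mem_positions hβ r
  exact (SeparatedAlong.of_source β (.const p)).congr fun _ _ _ hs hst => (h hs hst).1

theorem rel_swap (r : Vocab4) : Separated fun (T : UTree A) s t => r.rel T t s := by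
  intro β hβ
  obtain ⟨_, q, h⟩ := CorePath.decidesAtoms_of_mem_positions hβ r
  exact (SeparatedAlong.of_source β (.const q)).congr fun _ _ _ hs hst => (h hs hst).2

theorem eq : Separated fun (_ : UTree A) s t => s = t :=
  ((rel .desc).and (rel_swap .desc)).congr fun _ _ _ hs ht => UTree.eq_iff_descR_and_descR hs ht

theorem exists_mem_dom (hR : Separated R) :
    CoreDefinable fun T s => ∃ t ∈ T.dom, R T s t := by
  refine (CoreDefinable.exists_mem_of_finite (List.finite_toSet CorePath.positions)
    fun β hβ => (hR β hβ).exists_path).congr fun T s hs => ?_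
  constructor
  · rintro ⟨t, ht, hst⟩
    obtain ⟨β, hβ, hpath⟩ := CorePath.exists_positions hs ht
    exact ⟨β, hβ, t, hpath, hst⟩
  · rintro ⟨β, _, t, hpath, hst⟩
    exact ⟨t, β.mem_dom_of_sat hs hpath, hst⟩

theorem diag (hR : Separated R) : CoreDefinable fun T s => R T s s :=
  (eq.and hR).exists_mem_dom.congr fun T s hs => by
    constructor
    · exact fun h => ⟨s, hs, rfl, h⟩
    · rintro ⟨_, _, rfl, h⟩
      exact h

theorem comp_update (hR : Separated R) (hR' : Separated fun T s t => R T t s) (x a b : ℕ) :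
    Separated fun T s t =>
      R T (Function.update (fun _ => t) x s a) (Function.update (fun _ => t) x s b) := by
  rcases eq_or_ne x a with rfl | ha <;> rcases eq_or_ne x b with rfl | hb
  · simpa only [Function.update_self] using of_source hR.diag
  · simpa only [Function.update_self, Function.update_of_ne hb.symm] using hR
  · simpa only [Function.update_self, Function.update_of_ne ha.symm] using hR'
  · simpa only [Function.update_of_ne ha.symm, Function.update_of_ne hb.symm]
      using of_target hR.diag

end Separated

theorem CoreDefinable.separated_comp_update {P : UTree A → Node → Prop} (hP : CoreDefinable P)
    (x a : ℕ) : Separated fun T s t => P T (Function.update (fun _ => t) x s a) := by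
  rcases eq_or_ne x a with rfl | ha
  · simpa only [Function.update_self] using Separated.of_source hP
  · simpa only [Function.update_of_ne ha.symm] using Separated.of_target hP

end CoreDefinability

section TwoVariables

variable {A : Type}

namespace FOV

theorem sat_congr {T : UTree A} : ∀ {φ : FOV A} {v w : ℕ → Node},
    (∀ n ∈ φ.vars, v n = w n) → (φ.Sat T v ↔ φ.Sat T w)
  | .eq x y, v, w, h => by
    rw [Sat, Sat, h x (by simp [vars]), h y (by simp [vars])]
  | .lab a x, v, w, h => by
    rw [Sat, Sat, h x (by simp [vars])]
  | .rel r x y, v, w, h => by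
    rw [Sat, Sat, h x (by simp [vars]), h y (by simp [vars])]
  | .not φ, v, w, h => not_congr (sat_congr (φ := φ) h)
  | .and φ ψ, v, w, h =>
    and_congr (sat_congr fun n hn => h n (List.mem_append_left _ hn))
      (sat_congr fun n hn => h n (List.mem_append_right _ hn))
  | .ex x φ, v, w, h => by
    refine exists_congr fun s => and_congr_right fun _ => sat_congr fun n hn => ?_
    rcases eq_or_ne n x with rfl | hne
    · simp only [Function.update_self]
    · simp only [Function.update_of_ne hne, h n (List.mem_cons_of_mem _ hn)]

theorem twoVar_not_iff {φ : FOV A} : φ.not.TwoVar ↔ φ.TwoVar :=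
  .rfl

theorem twoVar_and_iff {φ ψ : FOV A} : (φ.and ψ).TwoVar ↔ φ.TwoVar ∧ ψ.TwoVar :=
  List.forall_mem_append

theorem twoVar_ex_iff {n : ℕ} {φ : FOV A} : (φ.ex n).TwoVar ↔ n < 2 ∧ φ.TwoVar :=
  List.forall_mem_cons

theorem sat_ex_iff {T : UTree A} {φ : FOV A} {n : ℕ} (hφ : (φ.ex n).TwoVar) (v : ℕ → Node) :
    (φ.ex n).Sat T v ↔
      ∃ t ∈ T.dom, φ.Sat T (Function.update (fun _ => t) (1 - n) (v (1 - n))) := by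
  obtain ⟨hn, hφ⟩ := twoVar_ex_iff.1 hφ
  refine exists_congr fun t => and_congr_right fun _ => sat_congr fun m hm => ?_
  have hm := hφ m hm
  rcases eq_or_ne m n with rfl | hne
  · rw [Function.update_self, Function.update_of_ne (by omega)]
  · obtain rfl : m = 1 - n := by omega
    rw [Function.update_self, Function.update_of_ne hne]

theorem TwoVar.separated : ∀ {φ : FOV A}, φ.TwoVar → ∀ x : ℕ,
    Separated fun T s t => φ.Sat T (Function.update (fun _ => t) x s)
  | .eq a b, _, x => Separated.eq.comp_update (by simpa only [eq_comm] using Separated.eq) x a b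
  | .lab a y, _, x => (CoreDefinable.lab a).separated_comp_update x y
  | .rel r a b, _, x => (Separated.rel r).comp_update (.rel_swap r) x a b
  | .not φ, h, x => (separated (twoVar_not_iff.1 h) x).not
  | .and φ ψ, h, x =>
    (separated (twoVar_and_iff.1 h).1 x).and (separated (twoVar_and_iff.1 h).2 x)
  | .ex n φ, h, x => by
    simp only [sat_ex_iff h]
    exact (separated (twoVar_ex_iff.1 h).2 (1 - n)).exists_mem_dom.separated_comp_update x (1 - n)

end FOV

namespace XStep

/-- The atomic formula `x st y` for a step `st`. -/
def toFOV : XStep → ℕ → ℕ → FOV A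
  | .ch, x, y => .rel .ch x y
  | .chI, x, y => .rel .ch y x
  | .ns, x, y => .rel .ns x y
  | .nsI, x, y => .rel .ns y x

/-- The formula `x st⁺ y` for a step `st`, expressed by the reflexive closures in the vocabulary. -/
def plusToFOV : XStep → ℕ → ℕ → FOV A
  | .ch, x, y => .and (.rel .desc x y) (.not (.eq x y))
  | .chI, x, y => .and (.rel .desc y x) (.not (.eq y x))
  | .ns, x, y => .and (.rel .sib x y) (.not (.eq x y))
  | .nsI, x, y => .and (.rel .sib y x) (.not (.eq y x))

variable {T : UTree A} {x y : ℕ}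

theorem twoVar_toFOV (st : XStep) (hx : x < 2) (hy : y < 2) :
    (st.toFOV (A := A) x y).TwoVar := by
  cases st <;> grind [toFOV, FOV.TwoVar, FOV.vars]

theorem twoVar_plusToFOV (st : XStep) (hx : x < 2) (hy : y < 2) :
    (st.plusToFOV (A := A) x y).TwoVar := by
  cases st <;> grind [plusToFOV, FOV.TwoVar, FOV.vars]

theorem sat_toFOV_iff (st : XStep) (v : ℕ → Node) :
    (st.toFOV x y).Sat T v ↔ st.rel T (v x) (v y) := by
  cases st <;> rfl

theorem sat_plusToFOV_iff (st : XStep) (v : ℕ → Node) :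
    (st.plusToFOV x y).Sat T v ↔ Relation.TransGen (st.rel T) (v x) (v y) := by
  cases st
  exacts [UTree.transGen_childR_iff.symm, transGen_chI_iff.symm, UTree.transGen_nsR_iff.symm,
    transGen_nsI_iff.symm]

end XStep

/-- The unary query `P` is defined by a two-variable formula with free variable `x`, whatever the
value of the other variable. -/
def FO2Definable (x : ℕ) (P : UTree A → Node → Prop) : Prop :=
  ∃ φ : FOV A, φ.TwoVar ∧ ∀ (T : UTree A) (v : ℕ → Node) (s : Node), s ∈ T.dom →
    (P T s ↔ φ.Sat T (Function.update v x s))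

namespace FO2Definable

variable {x y : ℕ} {P P' : UTree A → Node → Prop}

theorem congr (hP : FO2Definable x P) (h : ∀ T, ∀ s ∈ T.dom, (P' T s ↔ P T s)) :
    FO2Definable x P' := by
  obtain ⟨φ, hφ, hP⟩ := hP
  exact ⟨φ, hφ, fun T v s hs => (h T s hs).trans (hP T v s hs)⟩

theorem lab (hx : x < 2) (a : A) : FO2Definable x fun T s => s ∈ T.dom ∧ T.label s = a :=
  ⟨.lab a x, by simpa [FOV.TwoVar, FOV.vars] using hx,
    fun T v s _ => by simp only [FOV.Sat, Function.update_self]⟩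

theorem not (hP : FO2Definable x P) : FO2Definable x fun T s => ¬ P T s := by
  obtain ⟨φ, hφ, hP⟩ := hP
  exact ⟨.not φ, hφ, fun T v s hs => not_congr (hP T v s hs)⟩

theorem and (hP : FO2Definable x P) (hP' : FO2Definable x P') :
    FO2Definable x fun T s => P T s ∧ P' T s := by
  obtain ⟨φ, hφ, hP⟩ := hP
  obtain ⟨φ', hφ', hP'⟩ := hP'
  exact ⟨.and φ φ', FOV.twoVar_and_iff.2 ⟨hφ, hφ'⟩,
    fun T v s hs => and_congr (hP T v s hs) (hP' T v s hs)⟩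

theorem or (hP : FO2Definable x P) (hP' : FO2Definable x P') :
    FO2Definable x fun T s => P T s ∨ P' T s :=
  (hP.not.and hP'.not).not.congr fun _ _ _ => by tauto

theorem exists_of_sat_iff (hxy : x ≠ y) (hy : y < 2) {R : UTree A → Node → Node → Prop}
    {ρ : FOV A} (hρ : ρ.TwoVar) (hR : ∀ T v, ρ.Sat T v ↔ R T (v x) (v y))
    (hdom : ∀ T s t, R T s t → t ∈ T.dom) (hP : FO2Definable y P) :
    FO2Definable x fun T s => ∃ t, R T s t ∧ P T t := by
  obtain ⟨φ, hφ, hP⟩ := hP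
  refine ⟨.ex y (.and ρ φ), FOV.twoVar_ex_iff.2 ⟨hy, FOV.twoVar_and_iff.2 ⟨hρ, hφ⟩⟩,
    fun T v s _ => ?_⟩
  simp only [FOV.Sat, hR, Function.update_self, Function.update_of_ne hxy]
  constructor
  · rintro ⟨t, hst, ht⟩
    have hdom := hdom T s t hst
    exact ⟨t, hdom, hst, (hP T _ t hdom).1 ht⟩
  · rintro ⟨t, hdom, hst, ht⟩
    exact ⟨t, hst, (hP T _ t hdom).2 ht⟩

end FO2Definable

mutual

theorem CoreNode.fo2Definable : ∀ (α : CoreNode A) {x : ℕ}, x < 2 →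
    FO2Definable x fun T s => α.Sat T s
  | .lab a, x, hx => by
    simpa only [CoreNode.Sat] using FO2Definable.lab hx a
  | .not α, x, hx => by
    simpa only [CoreNode.Sat] using (α.fo2Definable hx).not
  | .or α α', x, hx => by
    simpa only [CoreNode.Sat] using (α.fo2Definable hx).or (α'.fo2Definable hx)
  | .E β, x, hx => by
    have htrue {y : ℕ} (hy : y < 2) : FO2Definable y fun (_ : UTree A) _ => True :=
      ⟨.eq y y, by simpa [FOV.TwoVar, FOV.vars] using hy, fun _ _ _ _ => by simp [FOV.Sat]⟩
    simpa only [CoreNode.Sat, and_true] using β.fo2Definable_exists htrue hx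

-- Carrying the target set `P` through the induction is what makes two variables suffice for a
-- composition `β/γ`: it is handled by `β` with the target set `{u | ∃ t, (u, t) ⊨ γ ∧ P t}`.
theorem CorePath.fo2Definable_exists : ∀ (β : CorePath A) {P : UTree A → Node → Prop},
    (∀ {y : ℕ}, y < 2 → FO2Definable y P) → ∀ {x : ℕ}, x < 2 →
      FO2Definable x fun T s => ∃ t, β.Sat T s t ∧ P T t
  | .test α, P, hP, x, hx => by
    simpa only [CorePath.Sat, and_assoc, exists_eq_left'] using (α.fo2Definable hx).and (hP hx)
  | .step st, P, hP, x, hx => by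
    have hy : 1 - x < 2 := by omega
    simpa only [CorePath.Sat] using FO2Definable.exists_of_sat_iff (by omega) hy
      (st.twoVar_toFOV hx hy) (fun _ v => st.sat_toFOV_iff v)
      (fun _ _ _ h => st.mem_dom_of_rel h) (hP hy)
  | .stepPlus st, P, hP, x, hx => by
    have hy : 1 - x < 2 := by omega
    simpa only [CorePath.Sat] using FO2Definable.exists_of_sat_iff (by omega) hy
      (st.twoVar_plusToFOV hx hy) (fun _ v => st.sat_plusToFOV_iff v)
      (fun _ _ _ h => st.mem_dom_of_transGen h) (hP hy)
  | .comp β γ, P, hP, x, hx => by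
    refine (β.fo2Definable_exists (fun hy => γ.fo2Definable_exists hP hy) hx).congr
      fun T s _ => ?_
    simp only [CorePath.Sat]
    grind
  | .or β γ, P, hP, x, hx => by
    simpa only [CorePath.Sat, or_and_right, exists_or] using
      (β.fo2Definable_exists hP hx).or (γ.fo2Definable_exists hP hx)

end

end TwoVariables

theorem corexpath_iff_fo2_general {A : Type} (P : UTree A → Node → Prop) :
    CoreDefinable P ↔ FO2Definable 0 P := by
  constructor
  · rintro ⟨α, hα⟩
    exact (α.fo2Definable Nat.two_pos).congr hα
  · rintro ⟨φ, hφ, h⟩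
    exact (hφ.separated 0).diag.congr fun T s hs => h T (fun _ => s) s hs

/-- The node formulas of Core XPath have precisely the power
of unary FO² queries (first-order logic with two variables) in the vocabulary
`≺_ch, ≺*_ch, ≺_ns, ≺*_ns` over ordered unranked Σ-trees. -/
theorem corexpath_iff_fo2 (A : Type) [Fintype A]
    (Q : UTree A → Set Node) (hQ : ∀ T, Q T ⊆ ↑T.dom) :
    (∃ α : CoreNode A, ∀ (T : UTree A) (s : Node), s ∈ T.dom →
        (s ∈ Q T ↔ CoreNode.Sat T s α)) ↔
    (∃ φ : FOV A, φ.TwoVar ∧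
      ∀ (T : UTree A) (v : ℕ → Node) (s : Node), s ∈ T.dom →
        (s ∈ Q T ↔ FOV.Sat T (Function.update v 0 s) φ)) := by
  exact corexpath_iff_fo2_general fun T s => s ∈ Q T

end UnrankedTrees
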